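/- Let K = K_0, 0 ≤ r ≤ p-1, and let M ∈ 'FL^fr_{W(k)} be a finite free Fontaine-Laffaille module (not necessarily strong). Then M satisfies the strongness condition Σ_{i=0}^r φ_i(Fil^i M) = M if and only if the associated module M_S(M) = S ⊗_{W(k)} M satisfies the strong divisibility condition that φ_r(Fil^r(S⊗M)) generates S⊗M over S (i.e., M_S(M) ∈ Mod_S^{φ,N,cris}). -/

import Mathlib

/-!
Common axiomatized setting for the note "Fontaine-Laffaille modules and strongly
divisible modules" (H. Gao).  We axiomatize the Breuil ring `S` (the `p`-adic
completion of the divided power envelope of `W(k)[u]` with respect to `(E(u))`),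
Fontaine-Laffaille modules, strongly divisible `S`-lattices, Kisin modules, and
the relevant period rings, together with all the structure maps and axioms
described in the paper.
-/

open scoped TensorProduct

noncomputable section

namespace FLSD

/-- Axiomatization of the Breuil ring `S`: the `p`-adic completion of the divided power
envelope of `W[u]` with respect to the ideal generated by the Eisenstein polynomial `E(u)`,
together with its Frobenius `φ` (semilinear over the Frobenius `σ` of `W = W(k)`),
the `W`-linear derivation `N` with `N u = -u`, the divided-power filtration `Fil^j S`
(with divided powers `dpow n = E(u)^n/n!`), the divided Frobenii `φdiv j = φ/p^j` on
`Fil^j S` (for `j ≤ p-1`), and the unit `c = φ(E(u))/p`. -/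
structure BreuilRingData (p : ℕ) (W : Type) [CommRing W] (σ : W →+* W) : Type 1 where
  S : Type
  [commRing : CommRing S]
  [algebra : Algebra W S]
  /-- the image of the variable `u` in `S` -/
  u : S
  /-- the image of the Eisenstein polynomial `E(u)` in `S` -/
  E : S
  /-- the Frobenius of `S` -/
  φ : S →+* S
  φ_algebraMap : ∀ w : W, φ (algebraMap W S w) = algebraMap W S (σ w)
  φ_u : φ u = u ^ p
  /-- the monodromy operator `N_S`, the `W`-linear derivation with `N_S u = -u` -/
  N : S →ₗ[W] S
  N_mul : ∀ x y : S, N (x * y) = x * N y + y * N x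
  N_u : N u = -u
  N_u_dvd : ∀ s : S, u ∣ N s
  /-- the divided power filtration `Fil^j S` -/
  Fil : ℕ → Ideal S
  Fil_zero : Fil 0 = ⊤
  Fil_antitone : ∀ i, Fil (i + 1) ≤ Fil i
  Fil_mul : ∀ i j, ∀ x ∈ Fil i, ∀ y ∈ Fil j, x * y ∈ Fil (i + j)
  E_mem : E ∈ Fil 1
  E_pow_mem : ∀ n, E ^ n ∈ Fil n
  /-- the divided powers `γ_n(E(u)) = E(u)^n/n!` -/
  dpow : ℕ → S
  dpow_mem : ∀ n, dpow n ∈ Fil n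
  dpow_spec : ∀ n, (n.factorial : S) * dpow n = E ^ n
  N_Fil : ∀ n, ∀ x ∈ Fil (n + 1), N x ∈ Fil n
  /-- `S` is `p`-torsion free -/
  p_torsionfree : ∀ x : S, (p : S) * x = 0 → x = 0
  /-- the divided Frobenius `φ_j = φ/p^j` on `Fil^j S`, for `j ≤ p - 1` -/
  φdiv : ℕ → S → S
  φdiv_spec : ∀ j, j + 1 ≤ p → ∀ x ∈ Fil j, (p : S) ^ j * φdiv j x = φ x
  /-- `c = φ(E(u))/p`, a unit of `S` -/
  c : S
  c_spec : (p : S) * c = φ E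
  c_unit : IsUnit c

attribute [instance] BreuilRingData.commRing BreuilRingData.algebra

/-- The extra structure available on the Breuil ring `S` in the unramified case `K = K₀`:
the Eisenstein polynomial has the form `E(u) = u + p a` with `a ∈ W(k)ˣ`, the element
`u^p/p` lies in `S`, and we have the `W`-algebra homomorphisms `f₀ : S → W(k)` (with
`u ↦ 0`) and `f_π : S → O_K = W(k)` (with `u ↦ π`, so `f_π (E(u)) = 0`). -/
structure UnramBreuilRingData (p : ℕ) (W : Type) [CommRing W] (σ : W →+* W)
    extends BreuilRingData p W σ where
  a : W
  aInv : W
  a_mul_aInv : a * aInv = 1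
  E_eq : E = u + (p : S) * algebraMap W S a
  /-- `u^p/p ∈ S` -/
  upDivP : S
  upDivP_spec : (p : S) * upDivP = u ^ p
  /-- the `W`-algebra homomorphism `f₀ : S → W`, `u ↦ 0` -/
  f0 : S →+* W
  f0_algebraMap : ∀ w : W, f0 (algebraMap W S w) = w
  f0_u : f0 u = 0
  /-- the `W`-algebra homomorphism `f_π : S → O_K = W`, `u ↦ π` -/
  fπ : S →+* W
  fπ_algebraMap : ∀ w : W, fπ (algebraMap W S w) = w
  fπ_E : fπ E = 0
  fπ_Fil : ∀ n, 1 ≤ n → ∀ x ∈ Fil n, fπ x = 0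

/-- The partial products `A · φ(A) · φ²(A) ⋯ φⁿ(A)` of the `σ`-twists of a matrix `A`. -/
def phiProd {R : Type} [CommRing R] (σ : R →+* R) {d : ℕ}
    (A : Matrix (Fin d) (Fin d) R) : ℕ → Matrix (Fin d) (Fin d) R
  | 0 => A
  | n + 1 => phiProd σ A n * A.map (fun x => (⇑σ)^[n + 1] x)

/-- A sequence of matrices tends to `0` for the `I`-adic topology. -/
def matTendstoZero {R : Type} [CommRing R] (I : Ideal R) {d : ℕ}
    (P : ℕ → Matrix (Fin d) (Fin d) R) : Prop :=
  ∀ m : ℕ, ∃ n₀ : ℕ, ∀ n ≥ n₀, ∀ i j, P n i j ∈ I ^ m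

/-- The recursively defined "canonical induced filtration":
`hatFil^0 = everything`, and `hatFil^{n+1} = {x | N x ∈ hatFil^n ∧ f_π x ∈ Fil^{n+1} M}`. -/
def hatFilSet {T M : Type} (Nop : T → T) (fp : T → M) (FilM : ℕ → Set M) : ℕ → Set T
  | 0 => Set.univ
  | n + 1 => {x | Nop x ∈ hatFilSet Nop fp FilM n ∧ fp x ∈ FilM (n + 1)}

/-! ### Fontaine-Laffaille modules -/

/-- A (finite free, not necessarily strong) Fontaine-Laffaille module over `W = W(k)`
(with Frobenius `σ`), with Hodge-Tate range `[0, r]`: a finite free `W`-module `M` with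
a decreasing filtration `Fil^i M` (each `Fil^{i+1} M` a direct summand of `Fil^i M`,
`Fil^0 M = M`, `Fil^{r+1} M = 0`) and `σ`-semilinear maps `φ_i : Fil^i M → M` with
`φ_i|_{Fil^{i+1} M} = p · φ_{i+1}`.  This is the category `'FL^fr_{W(k)}`. -/
structure FLModule (p r : ℕ) (W : Type) [CommRing W] (σ : W →+* W) : Type 1 where
  M : Type
  [addCommGroup : AddCommGroup M]
  [module : Module W M]
  free : Module.Free W M
  finite : Module.Finite W M
  Fil : ℕ → Submodule W M
  Fil_zero : Fil 0 = ⊤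
  Fil_antitone : ∀ i, Fil (i + 1) ≤ Fil i
  Fil_vanish : Fil (r + 1) = ⊥
  Fil_summand : ∀ i, ∃ C : Submodule W M,
    C ≤ Fil i ∧ Fil (i + 1) ⊓ C = ⊥ ∧ Fil (i + 1) ⊔ C = Fil i
  φ : ∀ i : ℕ, Fil i →ₛₗ[σ] M
  φ_succ : ∀ i (x : M) (hx : x ∈ Fil (i + 1)),
    φ i ⟨x, Fil_antitone i hx⟩ = (p : W) • φ (i + 1) ⟨x, hx⟩

attribute [instance] FLModule.addCommGroup FLModule.module

variable {p r : ℕ} {W : Type} [CommRing W] {σ : W →+* W}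

/-- The Frobenius `φ = φ_0 : M → M` of a Fontaine-Laffaille module. -/
def FLModule.Φ (M : FLModule p r W σ) (x : M.M) : M.M :=
  M.φ 0 ⟨x, by rw [M.Fil_zero]; exact Submodule.mem_top⟩

/-- The strongness condition `Σ_{i=0}^r φ_i(Fil^i M) = M` defining `FL^fr_{W(k)}`
inside `'FL^fr_{W(k)}`. -/
def FLModule.Strong (M : FLModule p r W σ) : Prop :=
  AddSubgroup.closure
    (⋃ i ∈ Finset.range (r + 1), Set.range fun x : M.Fil i => M.φ i x) = ⊤

/-- Morphisms of Fontaine-Laffaille modules: `W`-linear maps compatible with the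
filtrations and with all the `φ_i`. -/
structure FLHom (M₁ M₂ : FLModule p r W σ) where
  toFun : M₁.M →ₗ[W] M₂.M
  map_fil : ∀ i, ∀ x ∈ M₁.Fil i, toFun x ∈ M₂.Fil i
  map_φ : ∀ i (x : M₁.Fil i), toFun (M₁.φ i x) = M₂.φ i ⟨toFun x.1, map_fil i x.1 x.2⟩

/-- A Fontaine-Laffaille module is étale if `Fil^r M = M`. -/
def FLModule.Etale (M : FLModule p r W σ) : Prop := M.Fil r = ⊤

/-- A Fontaine-Laffaille module is unipotent if it has no nonzero étale quotient (quotients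
being taken in short exact sequences which are exact on all filtration pieces). -/
def FLModule.Unipotent (M : FLModule p r W σ) : Prop :=
  ∀ (M₂ : FLModule p r W σ) (f : FLHom M M₂), Function.Surjective f.toFun →
    (∀ i, Submodule.map f.toFun (M.Fil i) = M₂.Fil i) → M₂.Etale → Subsingleton M₂.M

/-- A sub-object of a Fontaine-Laffaille module: a `W`-submodule stable under all the `φ_i`
(with the induced filtration `Fil^i N' = N' ∩ Fil^i M`). -/
def FLModule.SubStable (M : FLModule p r W σ) (N' : Submodule W M.M) : Prop :=
  ∀ i (x : M.M) (hx : x ∈ M.Fil i), x ∈ N' → M.φ i ⟨x, hx⟩ ∈ N'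

/-- A sub-object is multiplicative if its induced `Fil^1` vanishes; a Fontaine-Laffaille
module is nilpotent if it has no nonzero multiplicative sub-object. -/
def FLModule.Nilpotent (M : FLModule p r W σ) : Prop :=
  ∀ N' : Submodule W M.M, M.SubStable N' → N' ⊓ M.Fil 1 = ⊥ → N' = ⊥

end FLSD
/-! ### Strongly divisible modules -/

namespace FLSD

variable {p r : ℕ} {W : Type} [CommRing W] {σ : W →+* W}

/-- An object of `'Mod_S^φ` (of weight `≤ r`): a finite free `S`-module `𝓜` with a
submodule `Fil^r 𝓜 ⊇ Fil^r S · 𝓜` such that `𝓜/Fil^r 𝓜` is `p`-torsion free, together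
with the `φ`-semilinear map `φ_r : Fil^r 𝓜 → 𝓜` satisfying
`φ_r(s x) = c^{-r} φ_r(s) φ_r(E(u)^r x)` for `s ∈ Fil^r S`, and the associated Frobenius
`φ = c^{-r} φ_r(E(u)^r ·) : 𝓜 → 𝓜` (so that `φ = p^r φ_r` on `Fil^r 𝓜`). -/
structure SPhiModule (p r : ℕ) {W : Type} [CommRing W] {σ : W →+* W}
    (D : BreuilRingData p W σ) : Type 1 where
  M : Type
  [addCommGroup : AddCommGroup M]
  [module : Module D.S M]
  free : Module.Free D.S M
  finite : Module.Finite D.S M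
  /-- `Fil^r 𝓜` -/
  Fil : Submodule D.S M
  smul_mem_fil : ∀ s ∈ D.Fil r, ∀ x : M, s • x ∈ Fil
  quot_p_torsionfree : ∀ x : M, (p : D.S) • x ∈ Fil → x ∈ Fil
  /-- the divided Frobenius `φ_r : Fil^r 𝓜 → 𝓜` -/
  φr : Fil →ₛₗ[D.φ] M
  /-- the Frobenius `φ : 𝓜 → 𝓜`, determined by `φ(x) = c^{-r} φ_r(E(u)^r x)` -/
  φtot : M →ₛₗ[D.φ] M
  φtot_spec : ∀ x : M,
    D.c ^ r • φtot x = φr ⟨D.E ^ r • x, smul_mem_fil _ (D.E_pow_mem r) x⟩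
  φr_spec : ∀ x : Fil, φtot x.1 = (p : D.S) ^ r • φr x
  φr_div : ∀ s (hs : s ∈ D.Fil r) (x : M),
    D.c ^ r • φr ⟨s • x, smul_mem_fil s hs x⟩ =
      D.φdiv r s • φr ⟨D.E ^ r • x, smul_mem_fil _ (D.E_pow_mem r) x⟩

attribute [instance] SPhiModule.addCommGroup SPhiModule.module

variable {D : BreuilRingData p W σ}

/-- The condition that `φ_r(Fil^r 𝓜)` generates `𝓜` over `S` (defining `Mod_S^φ`
inside `'Mod_S^φ`). -/
def SPhiModule.Gen (𝓜 : SPhiModule p r D) : Prop :=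
  Submodule.span D.S (Set.range 𝓜.φr) = ⊤

/-- `𝓜` is étale if `Fil^r 𝓜 = 𝓜`. -/
def SPhiModule.Etale (𝓜 : SPhiModule p r D) : Prop := 𝓜.Fil = ⊤

/-- `𝓜` is multiplicative if `Fil^r 𝓜 = Fil^r S · 𝓜`. -/
def SPhiModule.Mult (𝓜 : SPhiModule p r D) : Prop :=
  𝓜.Fil = D.Fil r • (⊤ : Submodule D.S 𝓜.M)

/-- Morphisms in `'Mod_S^φ`: `S`-linear maps preserving `Fil^r` and commuting with `φ_r`. -/
structure SPhiHom (𝓜₁ 𝓜₂ : SPhiModule p r D) where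
  toFun : 𝓜₁.M →ₗ[D.S] 𝓜₂.M
  map_fil : ∀ x ∈ 𝓜₁.Fil, toFun x ∈ 𝓜₂.Fil
  map_φr : ∀ x : 𝓜₁.Fil, toFun (𝓜₁.φr x) = 𝓜₂.φr ⟨toFun x.1, map_fil x.1 x.2⟩

/-- `𝓜` is unipotent if it has no nonzero étale quotient (quotients in short exact
sequences of `S`-modules which are also exact on the filtrations). -/
def SPhiModule.Unipotent (𝓜 : SPhiModule p r D) : Prop :=
  ∀ (𝓝 : SPhiModule p r D) (f : SPhiHom 𝓜 𝓝), Function.Surjective f.toFun →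
    Submodule.map f.toFun 𝓜.Fil = 𝓝.Fil → 𝓝.Etale → Subsingleton 𝓝.M

/-- An object of `'Mod_S^{φ,N}`: an object of `'Mod_S^φ` with a monodromy operator `N`
satisfying the Leibniz rule over `N_S`, Griffiths transversality
`E(u) N(Fil^r 𝓜) ⊆ Fil^r 𝓜`, and `φ_r(E(u) N x) = c N (φ_r x)`.  Objects with
`Gen` (i.e. `φ_r(Fil^r 𝓜)` generating) are the strongly divisible `S`-lattices. -/
structure SDivModule (p r : ℕ) {W : Type} [CommRing W] {σ : W →+* W}
    (D : BreuilRingData p W σ) extends SPhiModule p r D where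
  N : M → M
  N_add : ∀ x y, N (x + y) = N x + N y
  N_leibniz : ∀ (s : D.S) (x : M), N (s • x) = D.N s • x + s • N x
  N_fil : ∀ x ∈ Fil, D.E • N x ∈ Fil
  N_φr : ∀ (x : M) (hx : x ∈ Fil), φr ⟨D.E • N x, N_fil x hx⟩ = D.c • N (φr ⟨x, hx⟩)

/-- The condition `N(𝓜) ⊆ u 𝓜` cutting out `Mod_S^{φ,N,cris}` inside `Mod_S^{φ,N}`. -/
def SDivModule.Cris (𝓜 : SDivModule p r D) : Prop :=
  ∀ x : 𝓜.M, ∃ y : 𝓜.M, 𝓜.N x = D.u • y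

/-- Morphisms in `'Mod_S^{φ,N}`: morphisms in `'Mod_S^φ` commuting with `N`. -/
structure SDivHom (𝓜₁ 𝓜₂ : SDivModule p r D)
    extends SPhiHom 𝓜₁.toSPhiModule 𝓜₂.toSPhiModule where
  map_N : ∀ x, toFun (𝓜₁.N x) = 𝓜₂.N (toFun x)

/-- The submodule `u 𝓜 ⊆ 𝓜`. -/
def SDivModule.uSub (𝓜 : SDivModule p r D) : Submodule D.S 𝓜.M :=
  Ideal.span {D.u} • (⊤ : Submodule D.S 𝓜.M)

/-- The quotient `M = 𝓜 / u 𝓜`. -/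
abbrev SDivModule.Quot (𝓜 : SDivModule p r D) : Type := 𝓜.M ⧸ 𝓜.uSub

/-- The projection `𝓜 → 𝓜 / u 𝓜`. -/
def SDivModule.prQ (𝓜 : SDivModule p r D) : 𝓜.M →ₗ[D.S] 𝓜.Quot := 𝓜.uSub.mkQ

/-- A `φ`-equivariant (`W`-linear) section `s : M = 𝓜/u𝓜 → 𝓜` of the projection
`𝓜 → 𝓜/u𝓜`, where `M = 𝓜/u𝓜` carries the Frobenius induced by `φ = φ_𝓜`. -/
structure IsSection (𝓜 : SDivModule p r D) (sec : 𝓜.Quot → 𝓜.M) : Prop where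
  map_add : ∀ q q', sec (q + q') = sec q + sec q'
  map_wsmul : ∀ (w : W) (q : 𝓜.Quot),
    sec (algebraMap W D.S w • q) = algebraMap W D.S w • sec q
  is_section : ∀ q, 𝓜.prQ (sec q) = q
  φ_equiv : ∀ x : 𝓜.M, sec (𝓜.prQ (𝓜.φtot x)) = 𝓜.φtot (sec (𝓜.prQ x))

/-- The tensor product filtration `Fil^n_⊗ (S ⊗_W M) = Σ_{i+j=n} Fil^i S ⊗_W Fil^j M`. -/
def filTensorGen (D : BreuilRingData p W σ) (M : Type) [AddCommGroup M] [Module W M]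
    (FilM : ℕ → Submodule W M) (n : ℕ) : Submodule D.S (D.S ⊗[W] M) :=
  ⨆ i ∈ Finset.range (n + 1), Submodule.span D.S
    {x : D.S ⊗[W] M | ∃ s ∈ D.Fil i, ∃ m ∈ FilM (n - i), x = s ⊗ₜ[W] m}

/-- The statement that a strongly divisible module `𝓜` realizes `M_S(M) = S ⊗_{W(k)} M`
for a Fontaine-Laffaille module `M`: an `S`-linear isomorphism
`j : S ⊗_W M ≅ 𝓜` carrying `φ_S ⊗ φ_0` to `φ_𝓜`, `N_S ⊗ 1` to `N_𝓜`, and the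
tensor product filtration `Σ_{i=0}^r Fil^{r-i} S ⊗ Fil^i M` to `Fil^r 𝓜`
(the divided Frobenius `φ_r` is then automatically `Σ_{i=0}^r φ_{r-i,S} ⊗ φ_{i,M}`,
since `φ_r = φ/p^r`). -/
structure IsMS (M : FLModule p r W σ) (𝓜 : SDivModule p r D) where
  j : (D.S ⊗[W] M.M) ≃ₗ[D.S] 𝓜.M
  map_φ : ∀ (s : D.S) (m : M.M), 𝓜.φtot (j (s ⊗ₜ[W] m)) = j (D.φ s ⊗ₜ[W] M.Φ m)
  map_N : ∀ (s : D.S) (m : M.M), 𝓜.N (j (s ⊗ₜ[W] m)) = j (D.N s ⊗ₜ[W] m)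
  map_fil : 𝓜.Fil = Submodule.map j.toLinearMap (filTensorGen D M.M M.Fil r)

end FLSD
namespace FLSD

variable {p r : ℕ} {W : Type} [CommRing W] {σ : W →+* W}

/-- `f_π : S → W` as a `W`-linear map (unramified case). -/
def UnramBreuilRingData.fπLin (D : UnramBreuilRingData p W σ) : D.S →ₗ[W] W where
  toFun := D.fπ
  map_add' x y := map_add _ x y
  map_smul' w s := by
    simp only [RingHom.id_apply, smul_eq_mul, Algebra.smul_def, map_mul, D.fπ_algebraMap]

/-- The map `f_π : S ⊗_W M → M`, `s(u) ⊗ x ↦ s(π) x` (identifying `M` with `f_π(𝓜)`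
via `x ↦ 1 ⊗ x`). -/
def UnramBreuilRingData.fπT (D : UnramBreuilRingData p W σ) (M : Type) [AddCommGroup M]
    [Module W M] : (D.S ⊗[W] M) →ₗ[W] M :=
  TensorProduct.lift ((LinearMap.lsmul W M).comp D.fπLin)

variable {D : UnramBreuilRingData p W σ}

/-- The data entering the definition of the functor `M_FL` for
`𝓜 ∈ Mod_S^{φ,N,cris}` (with `M = 𝓜/u𝓜`):
* the filtration `filD i = 𝓜 ∩ Fil^i (𝓜[1/p])` induced from the canonical (Breuil)
  filtration of `𝓓 = 𝓜[1/p]`, with its standard properties (it is decreasing,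
  `p`-saturated, satisfies `Fil^i S · filD j ⊆ filD (i+j)`, `N(filD (i+1)) ⊆ filD i`,
  `filD r = Fil^r 𝓜`), and the canonical recursive description
  `x ∈ filD (n+1) ↔ (N x ∈ filD n ∧ f_π x ∈ Fil^{n+1} M)` coming from the canonical
  filtration on `𝓓` (where `Fil^{n+1} M := f_π(filD (n+1))`);
* the unique `φ`-equivariant section `s : M → 𝓜` (which induces `S ⊗_W M ≅ 𝓜`);
* the induced projection `f_π : 𝓜 → M` determined by `f_π(a • s(q)) = f_π(a) • q`. -/
structure MFLData (𝓜 : SDivModule p r D.toBreuilRingData) where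
  filD : ℕ → Submodule D.S 𝓜.M
  filD_zero : filD 0 = ⊤
  filD_antitone : ∀ i, filD (i + 1) ≤ filD i
  filD_r : filD r = 𝓜.Fil
  filD_sat : ∀ i (x : 𝓜.M), (p : D.S) • x ∈ filD i → x ∈ filD i
  filD_smul : ∀ i j, ∀ s ∈ D.Fil i, ∀ x ∈ filD j, s • x ∈ filD (i + j)
  filD_N : ∀ i, ∀ x ∈ filD (i + 1), 𝓜.N x ∈ filD i
  sec : 𝓜.Quot → 𝓜.M
  sec_isSection : IsSection 𝓜 sec
  sec_span : Submodule.span D.S (Set.range sec) = ⊤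
  fπM : 𝓜.M → 𝓜.Quot
  fπM_add : ∀ x y, fπM (x + y) = fπM x + fπM y
  fπM_sec : ∀ (s : D.S) (q : 𝓜.Quot), fπM (s • sec q) = algebraMap W D.S (D.fπ s) • q
  filD_canon : ∀ n (x : 𝓜.M), x ∈ filD (n + 1) ↔
    (𝓜.N x ∈ filD n ∧ fπM x ∈ fπM '' (filD (n + 1) : Set 𝓜.M))

/-- Given `MFLData` for `𝓜`, the tensor product filtration on `𝓜 ≅ S ⊗_W M`:
`Fil^n_⊗ 𝓜 = Σ_{i+j=n} Fil^i S • s(Fil^j M)` where `Fil^j M = f_π(filD j)`. -/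
def MFLData.filT {𝓜 : SDivModule p r D.toBreuilRingData} (h : MFLData 𝓜) (n : ℕ) :
    Submodule D.S 𝓜.M :=
  ⨆ i ∈ Finset.range (n + 1), Submodule.span D.S
    {x : 𝓜.M | ∃ s ∈ D.Fil i, ∃ q ∈ h.fπM '' (h.filD (n - i) : Set 𝓜.M),
      x = s • h.sec q}

/-- Given `MFLData` for `𝓜`, the canonical induced filtration
`hatFil^0 𝓜 = 𝓜`, `hatFil^{n+1} 𝓜 = {x | N x ∈ hatFil^n 𝓜 ∧ f_π x ∈ Fil^{n+1} M}`. -/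
def MFLData.hatFil {𝓜 : SDivModule p r D.toBreuilRingData} (h : MFLData 𝓜) : ℕ → Set 𝓜.M :=
  hatFilSet 𝓜.N h.fπM (fun n => h.fπM '' (h.filD n : Set 𝓜.M))

/-- The statement that a Fontaine-Laffaille module `M'` realizes `M_FL(𝓜)` for a strongly
divisible module `𝓜 ∈ Mod_S^{φ,N,cris}`: the underlying module of `M'` is `M = 𝓜/u𝓜`
with the induced Frobenius, and `Fil^i M' = Fil^i M := f_π(Fil^i 𝓜)`. -/
structure IsMFLRep (𝓜 : SDivModule p r D.toBreuilRingData) (M' : FLModule p r W σ)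
    extends MFLData 𝓜 where
  e : M'.M → 𝓜.Quot
  e_bij : Function.Bijective e
  e_add : ∀ x y, e (x + y) = e x + e y
  e_smul : ∀ (w : W) (x : M'.M), e (w • x) = algebraMap W D.S w • e x
  e_fil : ∀ i, e '' (M'.Fil i : Set M'.M) = fπM '' (filD i : Set 𝓜.M)
  e_φ : ∀ x : M'.M, e (M'.Φ x) = 𝓜.prQ (𝓜.φtot (sec (e x)))

end FLSD
namespace FLSD

/-! ### Galois representations and period rings (axiomatized) -/

/-- A `G`-stable `ℤ_p`-lattice: a finite free `ℤ_p`-module with a `G`-action. -/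
structure ZpGRep (p : ℕ) [Fact p.Prime] (G : Type) [Group G] : Type 1 where
  T : Type
  [addCommGroup : AddCommGroup T]
  [module : Module ℤ_[p] T]
  free : Module.Free ℤ_[p] T
  finite : Module.Finite ℤ_[p] T
  ρ : Representation ℤ_[p] G T

attribute [instance] ZpGRep.addCommGroup ZpGRep.module

/-- Morphisms of `ℤ_p[G]`-lattices: `ℤ_p`-linear `G`-equivariant maps. -/
structure ZpGRepHom {p : ℕ} [Fact p.Prime] {G : Type} [Group G] (R₁ R₂ : ZpGRep p G) where
  toFun : R₁.T →ₗ[ℤ_[p]] R₂.T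
  equivariant : ∀ (g : G) (x : R₁.T), toFun (R₁.ρ g x) = R₂.ρ g (toFun x)

variable {p r : ℕ} {W : Type} [CommRing W] {σ : W →+* W}

/-- Axiomatization of the Galois-theoretic input: the absolute Galois group `G = G_K`,
Fontaine's crystalline period ring `A_cris` (with its Frobenius `φ`, filtration
`Fil^i A_cris`, divided Frobenii `φ_i = φ/p^i`, and `G`-action), Breuil's period ring
`Â_st` (an `S`-algebra with `Fil^r`, divided Frobenius `φ_r`, monodromy `N`, and
`G`-action), and the predicates from (rational) `p`-adic Hodge theory singling out the
`G`-stable `ℤ_p`-lattices in crystalline (resp. semi-stable) representations with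
Hodge-Tate weights in `[0, r]`, and the unipotent ones. -/
structure PeriodData (p r : ℕ) [Fact p.Prime] {W : Type} [CommRing W] {σ : W →+* W}
    (D : BreuilRingData p W σ) : Type 1 where
  G : Type
  [group : Group G]
  Acris : Type
  [AcrisCommRing : CommRing Acris]
  [AcrisAlgW : Algebra W Acris]
  [AcrisAlgZp : Algebra ℤ_[p] Acris]
  φA : Acris →+* Acris
  FilA : ℕ → Ideal Acris
  FilA_zero : FilA 0 = ⊤
  FilA_antitone : ∀ i, FilA (i + 1) ≤ FilA i
  φdivA : ℕ → Acris → Acris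
  φdivA_spec : ∀ j, j + 1 ≤ p → ∀ x ∈ FilA j, (p : Acris) ^ j * φdivA j x = φA x
  gA : G →* RingAut Acris
  Ast : Type
  [AstCommRing : CommRing Ast]
  [AstAlgS : Algebra D.S Ast]
  [AstAlgZp : Algebra ℤ_[p] Ast]
  /-- `Fil^r Â_st` -/
  FilAst : Submodule D.S Ast
  /-- the divided Frobenius `φ_r` of `Â_st` -/
  φrAst : Ast → Ast
  /-- the monodromy operator of `Â_st` -/
  NAst : Ast → Ast
  gAst : G →* RingAut Ast
  /-- the predicate "`T` is a `G`-stable `ℤ_p`-lattice in a crystalline representation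
  with Hodge-Tate weights in `[0,r]`" -/
  IsCrystallineLattice : ZpGRep p G → Prop
  /-- the predicate "`T` is a `G`-stable `ℤ_p`-lattice in a semi-stable representation
  with Hodge-Tate weights in `[0,r]`" -/
  IsSemistableLattice : ZpGRep p G → Prop
  /-- the predicate "`T` is a lattice in a unipotent representation (i.e. whose
  weakly admissible filtered `(φ,N)`-module has no nonzero étale quotient)" -/
  IsUnipotentLattice : ZpGRep p G → Prop

attribute [instance] PeriodData.group PeriodData.AcrisCommRing PeriodData.AcrisAlgW
  PeriodData.AcrisAlgZp PeriodData.AstCommRing PeriodData.AstAlgS PeriodData.AstAlgZp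

variable {D : BreuilRingData p W σ} [Fact p.Prime]

/-- The underlying set of `T^*_cris(M) = Hom_{W(k),φ_i,Fil^i}(M, A_cris)`:
`W`-linear maps compatible with the filtrations and all divided Frobenii. -/
def TcrisSet (M : FLModule p r W σ) (P : PeriodData p r D) : Set (M.M → P.Acris) :=
  {f | (∀ x y, f (x + y) = f x + f y) ∧
       (∀ (w : W) (x : M.M), f (w • x) = algebraMap W P.Acris w * f x) ∧
       (∀ i, ∀ x ∈ M.Fil i, f x ∈ P.FilA i) ∧
       (∀ i (x : M.Fil i), f (M.φ i x) = P.φdivA i (f x.1))}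

/-- The underlying set of `T_st(𝓜) = Hom_{'Mod_S^{φ,N}}(𝓜, Â_st)`:
`S`-linear maps compatible with `Fil^r`, `φ_r` and `N`. -/
def TstSet (𝓜 : SDivModule p r D) (P : PeriodData p r D) : Set (𝓜.M → P.Ast) :=
  {f | (∀ x y, f (x + y) = f x + f y) ∧
       (∀ (s : D.S) (x : 𝓜.M), f (s • x) = algebraMap D.S P.Ast s * f x) ∧
       (∀ x ∈ 𝓜.Fil, f x ∈ P.FilAst) ∧
       (∀ x : 𝓜.Fil, f (𝓜.φr x) = P.φrAst (f x.1)) ∧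
       (∀ x, f (𝓜.N x) = P.NAst (f x))}

/-- The statement that a `ℤ_p[G]`-lattice `R` realizes `T^*_cris(M)` (with `G` acting on
`Hom(M, A_cris)` through its action on `A_cris`). -/
structure IsTcrisRep (M : FLModule p r W σ) (P : PeriodData p r D) (R : ZpGRep p P.G) where
  e : R.T →ₗ[ℤ_[p]] (M.M → P.Acris)
  inj : Function.Injective e
  range : Set.range e = TcrisSet M P
  equivariant : ∀ (g : P.G) (t : R.T) (x : M.M), e (R.ρ g t) x = P.gA g (e t x)

/-- The statement that a `ℤ_p[G]`-lattice `R` realizes `T_st(𝓜)` (with `G` acting on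
`Hom(𝓜, Â_st)` through its action on `Â_st`). -/
structure IsTstRep (𝓜 : SDivModule p r D) (P : PeriodData p r D) (R : ZpGRep p P.G) where
  e : R.T →ₗ[ℤ_[p]] (𝓜.M → P.Ast)
  inj : Function.Injective e
  range : Set.range e = TstSet 𝓜 P
  equivariant : ∀ (g : P.G) (t : R.T) (x : 𝓜.M), e (R.ρ g t) x = P.gAst g (e t x)

/-! ### Kisin modules -/

/-- A finite free Kisin module of `E(u)`-height `r` over `𝔖 = W[[u]]`, with Frobenius `φ_𝔖`
(acting as `σ` on `W` and `u ↦ u^p`): the cokernel of the linearization `1 ⊗ φ` is killed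
by `E(u)^r`, i.e. `E(u)^r 𝔐 ⊆ ⟨φ(𝔐)⟩`. -/
structure KisinModule (p r : ℕ) (W : Type) [CommRing W]
    (φS : PowerSeries W →+* PowerSeries W) (Eg : PowerSeries W) : Type 1 where
  M : Type
  [addCommGroup : AddCommGroup M]
  [module : Module (PowerSeries W) M]
  free : Module.Free (PowerSeries W) M
  finite : Module.Finite (PowerSeries W) M
  φ : M →ₛₗ[φS] M
  height : ∀ x : M, Eg ^ r • x ∈ Submodule.span (PowerSeries W) (Set.range φ)

attribute [instance] KisinModule.addCommGroup KisinModule.module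

variable {φS : PowerSeries W →+* PowerSeries W} {Eg : PowerSeries W}

/-- A Kisin module is étale if `⟨(1⊗φ)(𝔖 ⊗_{φ,𝔖} 𝔐)⟩ = E(u)^r 𝔐`. -/
def KisinModule.Etale (𝔐 : KisinModule p r W φS Eg) : Prop :=
  Submodule.span (PowerSeries W) (Set.range 𝔐.φ) =
    Ideal.span {Eg ^ r} • (⊤ : Submodule (PowerSeries W) 𝔐.M)

/-- Morphisms of Kisin modules: `φ`-compatible `𝔖`-module homomorphisms. -/
structure KisinHom (𝔐₁ 𝔐₂ : KisinModule p r W φS Eg) where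
  toFun : 𝔐₁.M →ₗ[PowerSeries W] 𝔐₂.M
  map_φ : ∀ x, toFun (𝔐₁.φ x) = 𝔐₂.φ (toFun x)

/-- A Kisin module is unipotent if it has no nonzero étale quotient. -/
def KisinModule.Unipotent (𝔐 : KisinModule p r W φS Eg) : Prop :=
  ∀ (𝔑 : KisinModule p r W φS Eg) (f : KisinHom 𝔐 𝔑), Function.Surjective f.toFun →
    𝔑.Etale → Subsingleton 𝔑.M

end FLSD
namespace FLSD

theorem FLModule.Φ_eq {p r : ℕ} {W : Type} [CommRing W] {σ : W →+* W}
    (M : FLModule p r W σ) (n : ℕ) (x : M.M) (hx : x ∈ M.Fil n) :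
    M.Φ x = (p : W) ^ n • M.φ n ⟨x, hx⟩ := by
  induction n with
  | zero => simp [FLModule.Φ]
  | succ n ih =>
    rw [ih (M.Fil_antitone n hx), M.φ_succ n x hx, smul_smul, pow_succ]

theorem SPhiModule.p_pow_cancel {p r : ℕ} {W : Type} [CommRing W] {σ : W →+* W}
    {D : BreuilRingData p W σ} (𝓜 : SPhiModule p r D) (n : ℕ) (x y : 𝓜.M)
    (hxy : (p : D.S) ^ n • x = (p : D.S) ^ n • y) : x = y := by
  have key : ∀ z : 𝓜.M, (p : D.S) • z = 0 → z = 0 := by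
    intro z hz
    have := 𝓜.free
    let b := Module.Free.chooseBasis D.S 𝓜.M
    apply b.repr.injective
    ext i
    have h1 := congrArg (fun t => b.repr t i) hz
    simp only [map_smul, map_zero, Finsupp.smul_apply, smul_eq_mul, Finsupp.zero_apply] at h1
    simpa using D.p_torsionfree _ h1
  induction n with
  | zero => simpa using hxy
  | succ n ih =>
    apply ih
    rw [← sub_eq_zero]
    apply key
    rw [smul_sub, smul_smul, smul_smul, ← pow_succ', hxy, sub_self]

theorem IsMS.mem_fil {p r : ℕ} {W : Type} [CommRing W] {σ : W →+* W}
    {D : BreuilRingData p W σ} {M : FLModule p r W σ} {𝓜 : SDivModule p r D} (h : IsMS M 𝓜)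
    (i : ℕ) (hi : i ≤ r) (s : D.S) (hs : s ∈ D.Fil i) (m : M.M) (hm : m ∈ M.Fil (r - i)) :
    h.j (s ⊗ₜ[W] m) ∈ 𝓜.Fil := by
  rw [h.map_fil]
  refine Submodule.mem_map_of_mem (f := h.j.toLinearMap) ?_
  unfold filTensorGen
  refine Submodule.mem_iSup_of_mem i (Submodule.mem_iSup_of_mem ?_ ?_)
  · simp; omega
  · exact Submodule.subset_span ⟨s, hs, m, hm, rfl⟩

theorem IsMS.φr_eq {p r : ℕ} {W : Type} [CommRing W] {σ : W →+* W}
    {D : BreuilRingData p W σ} {M : FLModule p r W σ} {𝓜 : SDivModule p r D} (h : IsMS M 𝓜)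
    (hr : r + 1 ≤ p)
    (i : ℕ) (hi : i ≤ r) (s : D.S) (hs : s ∈ D.Fil i) (m : M.M) (hm : m ∈ M.Fil (r - i)) :
    𝓜.φr ⟨h.j (s ⊗ₜ[W] m), h.mem_fil i hi s hs m hm⟩ =
      D.φdiv i s • h.j (1 ⊗ₜ[W] M.φ (r - i) ⟨m, hm⟩) := by
  apply 𝓜.p_pow_cancel r
  rw [← 𝓜.φr_spec, h.map_φ, M.Φ_eq (r - i) m hm, ← D.φdiv_spec i (by omega) s hs]
  rw [← map_smul h.j, ← map_smul h.j]
  congr 1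
  rw [← TensorProduct.smul_tmul, TensorProduct.smul_tmul',
    TensorProduct.smul_tmul']
  congr 1
  have hp : (p : D.S) ^ r = (p : D.S) ^ (r - i) * (p : D.S) ^ i := by
    rw [← pow_add]; congr 1; omega
  rw [Algebra.smul_def]
  simp only [smul_eq_mul, map_pow, map_natCast, mul_one]
  rw [hp]; ring

/-- Lemma 3.2 of the paper.  Let `K = K₀`, `0 ≤ r ≤ p - 1`, and let
`M ∈ 'FL^fr_{W(k)}` be a finite free Fontaine-Laffaille module (not necessarily strong).
Then `M` satisfies the strongness condition `Σ_{i=0}^r φ_i(Fil^i M) = M` if and only if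
the associated module `M_S(M) = S ⊗_{W(k)} M` satisfies the strong divisibility condition
that `φ_r(Fil^r (S ⊗ M))` generates `S ⊗ M` over `S` (i.e. `M_S(M) ∈ Mod_S^{φ,N,cris}`,
the condition `N(M_S(M)) ⊆ u · M_S(M)` being automatic). -/
theorem statement_5 (p : ℕ) [Fact p.Prime]
    (k : Type) [Field k] [CharP k p] [PerfectRing k p]
    (r : ℕ) (hr : r ≤ p - 1)
    (D : UnramBreuilRingData p (WittVector p k)
      (WittVector.frobenius : WittVector p k →+* WittVector p k))
    (M : FLModule p r (WittVector p k) WittVector.frobenius)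
    (𝓜 : SDivModule p r D.toBreuilRingData) (h : IsMS M 𝓜) :
    M.Strong ↔ (SPhiModule.Gen 𝓜.toSPhiModule ∧ 𝓜.Cris) := by
  have hp2 : 2 ≤ p := (Fact.out : p.Prime).two_le
  have hr' : r + 1 ≤ p := by omega
  constructor
  · intro hS
    constructor
    · unfold SPhiModule.Gen
      set Q := Submodule.span D.S (Set.range 𝓜.φr) with hQ
      have h1 : ∀ i, i ≤ r → ∀ m : M.Fil i, h.j (1 ⊗ₜ[WittVector p k] M.φ i m) ∈ Q := by
        intro i hi m
        have hm : (m : M.M) ∈ M.Fil (r - (r - i)) := by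
          rw [show r - (r - i) = i by omega]; exact m.2
        have e := h.φr_eq hr' (r - i) (by omega) (D.E ^ (r - i)) (D.E_pow_mem _) m hm
        have e2 : ∀ l (hl : (m : M.M) ∈ M.Fil l), l = i → M.φ l ⟨m, hl⟩ = M.φ i m := by
          rintro l hl rfl; rfl
        rw [e2 _ hm (by omega)] at e
        have hc : D.φdiv (r - i) (D.E ^ (r - i)) = D.c ^ (r - i) := by
          have hcan : ∀ n (x y : D.S), (p : D.S) ^ n * x = (p : D.S) ^ n * y → x = y := by
            intro n
            induction n with
            | zero => intro x y hxy; simpa using hxy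
            | succ n ih =>
              intro x y hxy
              apply ih
              rw [← sub_eq_zero]
              apply D.p_torsionfree
              linear_combination hxy
          apply hcan (r - i)
          rw [D.φdiv_spec (r - i) (by omega) _ (D.E_pow_mem _), map_pow, ← D.c_spec, mul_pow]
        rw [hc] at e
        obtain ⟨c', hc'⟩ := (D.c_unit.pow (r - i)).exists_left_inv
        have e3 := congrArg (fun z => c' • z) e
        simp only [smul_smul, hc', one_smul] at e3
        rw [← e3]
        exact Q.smul_mem _ (Submodule.subset_span ⟨_, rfl⟩)
      have h2 : ∀ m : M.M, h.j (1 ⊗ₜ[WittVector p k] m) ∈ Q := by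
        intro m
        have hm : m ∈ AddSubgroup.closure
          (⋃ i ∈ Finset.range (r + 1), Set.range fun x : M.Fil i => M.φ i x) := by
          rw [show _ = ⊤ from hS]; trivial
        induction hm using AddSubgroup.closure_induction with
        | mem x hx =>
          simp only [Set.mem_iUnion, Finset.mem_range] at hx
          obtain ⟨i, hi, y, rfl⟩ := hx
          exact h1 i (by omega) y
        | zero => simp
        | add x y _ _ hx hy =>
          rw [TensorProduct.tmul_add, map_add]; exact Q.add_mem hx hy
        | neg x _ hx =>
          rw [TensorProduct.tmul_neg, map_neg]; exact Q.neg_mem hx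
      rw [eq_top_iff]
      rintro x -
      obtain ⟨t, rfl⟩ := h.j.surjective x
      induction t using TensorProduct.induction_on with
      | zero => simp
      | add x y hx hy => rw [map_add]; exact Q.add_mem hx hy
      | tmul s m =>
        have : s ⊗ₜ[WittVector p k] m = s • ((1 : D.S) ⊗ₜ[WittVector p k] m) := by
          rw [TensorProduct.smul_tmul']; simp
        rw [this, map_smul]
        exact Q.smul_mem _ (h2 m)
    · intro x
      obtain ⟨t, rfl⟩ := h.j.surjective x
      induction t using TensorProduct.induction_on with
      | zero =>
        refine ⟨0, ?_⟩
        have := 𝓜.N_add 0 0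
        simpa using this
      | add x y hx hy =>
        obtain ⟨a, ha⟩ := hx
        obtain ⟨b, hb⟩ := hy
        exact ⟨a + b, by rw [map_add, 𝓜.N_add, ha, hb, smul_add]⟩
      | tmul s m =>
        obtain ⟨v, hv⟩ := D.N_u_dvd s
        refine ⟨h.j (v ⊗ₜ m), ?_⟩
        rw [h.map_N, hv, ← map_smul, TensorProduct.smul_tmul', smul_eq_mul]
  · rintro ⟨hG, -⟩
    let G : AddSubgroup M.M := AddSubgroup.closure
      (⋃ i ∈ Finset.range (r + 1), Set.range fun x : M.Fil i => M.φ i x)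
    have hsm : ∀ (w : WittVector p k) (x : M.M), x ∈ G → w • x ∈ G := by
      intro w x hx
      induction hx using AddSubgroup.closure_induction with
      | mem x hx =>
        simp only [Set.mem_iUnion, Finset.mem_range] at hx
        obtain ⟨i, hi, y, rfl⟩ := hx
        obtain ⟨v, rfl⟩ := (WittVector.frobenius_bijective p k).2 w
        refine AddSubgroup.subset_closure ?_
        simp only [Set.mem_iUnion, Finset.mem_range]
        exact ⟨i, hi, v • y, by simp⟩
      | zero => simp [G.zero_mem]
      | add x y _ _ hx hy => rw [smul_add]; exact G.add_mem hx hy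
      | neg x _ hx => rw [smul_neg]; exact G.neg_mem hx
    let Q : Submodule D.S 𝓜.M := Submodule.span D.S
      {x | ∃ i ≤ r, ∃ m : M.Fil i, x = h.j (1 ⊗ₜ[WittVector p k] M.φ i m)}
    have hfil : 𝓜.Fil ≤ Submodule.map 𝓜.Fil.subtype (Submodule.comap 𝓜.φr Q) := by
      conv_lhs => rw [h.map_fil]
      rw [Submodule.map_le_iff_le_comap]
      unfold filTensorGen
      refine iSup₂_le fun i hi => ?_
      rw [Submodule.span_le]
      rintro x ⟨s, hs, m, hm, rfl⟩
      have hi' : i ≤ r := by simp at hi; omega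
      refine ⟨⟨_, h.mem_fil i hi' s hs m hm⟩, ?_, rfl⟩
      show 𝓜.φr _ ∈ Q
      rw [h.φr_eq hr' i hi' s hs m hm]
      exact Q.smul_mem _ (Submodule.subset_span ⟨r - i, by omega, ⟨m, hm⟩, rfl⟩)
    have hQ : Q = ⊤ := by
      rw [eq_top_iff, ← show _ = ⊤ from hG, Submodule.span_le]
      rintro _ ⟨⟨x, hx⟩, rfl⟩
      obtain ⟨y, hy, hyx⟩ := hfil hx
      have : y = ⟨x, hx⟩ := Subtype.ext hyx
      exact this ▸ hy
    have hsmul : ∀ (s : D.S) (t : D.S ⊗[WittVector p k] M.M),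
        D.fπT M.M (s • t) = D.fπ s • D.fπT M.M t := by
      intro s t
      induction t using TensorProduct.induction_on with
      | zero => simp
      | add x y hx hy => rw [smul_add, map_add, map_add, hx, hy, smul_add]
      | tmul a m =>
        rw [TensorProduct.smul_tmul']
        simp [UnramBreuilRingData.fπT, UnramBreuilRingData.fπLin, mul_smul]
    have hone : ∀ m : M.M, D.fπT M.M (1 ⊗ₜ m) = m := by
      intro m
      simp [UnramBreuilRingData.fπT, UnramBreuilRingData.fπLin]
    have hall : ∀ x : 𝓜.M, D.fπT M.M (h.j.symm x) ∈ G := by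
      intro x
      have hx : x ∈ Q := by rw [hQ]; trivial
      induction hx using Submodule.span_induction with
      | mem x hx =>
        obtain ⟨i, hi, m, rfl⟩ := hx
        rw [LinearEquiv.symm_apply_apply, hone]
        refine AddSubgroup.subset_closure ?_
        simp only [Set.mem_iUnion, Finset.mem_range]
        exact ⟨i, by omega, m, rfl⟩
      | zero => simp [G.zero_mem]
      | add x y _ _ hx hy => rw [map_add, map_add]; exact G.add_mem hx hy
      | smul a x _ hx => rw [map_smul, hsmul]; exact hsm _ _ hx
    show G = ⊤
    rw [eq_top_iff]
    rintro m -
    have := hall (h.j (1 ⊗ₜ m))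
    rwa [LinearEquiv.symm_apply_apply, hone] at this

end FLSD
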